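/- arXiv:cs/0608032 — 5 statements merged into one kernel-verified Lean document; each statement's English description precedes it below -/
import Mathlib

section
/- For all lists f and g of Booleans with the same length, GT f g = true if and only if val f > val g. -/
/-!
Peeling off a leading bit `b` from a list of length `k + 1` gives
`val (b :: bs) = b * 2 ^ k + val bs` with `val bs < 2 ^ k`. Hence for two lists of equal length
the leading bits decide the comparison when they differ, and cancel when they agree, which is
exactly the recursion of `GTb`.
-/

/-- Value of a big-endian list of bits. -/
def val (bs : List Bool) : ℕ :=
  bs.foldl (fun n b => 2 * n + (if b then 1 else 0)) 0

/-- Propositional greater-than encoding on big-endian bit lists. -/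
def GTb : List Bool → List Bool → Bool
  | [], [] => false
  | a :: f, b :: g => (a && !b) || ((a == b) && GTb f g)
  | _, _ => false

/-- The fold with an arbitrary initial accumulator, which is shifted past all the bits. -/
theorem foldl_eq_mul_two_pow_add_val (bs : List Bool) (n : ℕ) :
    bs.foldl (fun n b => 2 * n + (if b then 1 else 0)) n = n * 2 ^ bs.length + val bs := by
  induction bs generalizing n with
  | nil => simp [val]
  | cons b bs ih =>
    rw [val, List.foldl_cons, List.foldl_cons, ih, ih (2 * 0 + _), List.length_cons]
    ring

theorem val_cons (b : Bool) (bs : List Bool) :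
    val (b :: bs) = (if b then 1 else 0) * 2 ^ bs.length + val bs := by
  rw [val, List.foldl_cons, foldl_eq_mul_two_pow_add_val, mul_zero, zero_add]

theorem val_lt_two_pow (bs : List Bool) : val bs < 2 ^ bs.length := by
  induction bs with
  | nil => simp [val]
  | cons b bs ih =>
    rw [val_cons, List.length_cons, pow_succ]
    split <;> omega

theorem gtb_correct (f g : List Bool) (h : f.length = g.length) :
    GTb f g = true ↔ val f > val g := by
  induction f generalizing g with
  | nil =>
    cases g with
    | nil => simp [GTb]
    | cons b g => simp at h
  | cons a f ih =>
    cases g with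
    | nil => simp at h
    | cons b g =>
      have hl : f.length = g.length := by simpa using h
      have hf := val_lt_two_pow f
      have hg := val_lt_two_pow g
      rw [val_cons, val_cons, hl]
      rw [hl] at hf
      cases a <;> cases b <;> simp [GTb, ih g hl] <;> omega
end

section
/- Let l be a natural number, let a and b be natural numbers with a < 2^l and b < 2^l, and let x, y, z be Booleans exactly one of which is true. Then the integer inequality -⟦x⟧ + 2^l * ⟦y⟧ + 2^l * ⟦z⟧ + a - b ≥ 0 holds if and only if (x = true → a > b). (This is the correctness of the second PREC-PBC constraint: it encodes the conditions put on the X variables of the precedence.) -/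
theorem prec_pbc_second_constraint_correct (l : ℕ) (a b : ℕ)
    (ha : a < 2 ^ l) (hb : b < 2 ^ l) (x y z : Bool)
    (hxyz : (if x then 1 else 0) + (if y then 1 else 0) + (if z then 1 else 0) = 1) :
    -(if x then (1 : ℤ) else 0) + 2 ^ l * (if y then 1 else 0) +
        2 ^ l * (if z then 1 else 0) + (a : ℤ) - (b : ℤ) ≥ 0 ↔
      (x = true → a > b) := by
  have hb' : (b : ℤ) < 2 ^ l := by exact_mod_cast hb
  -- If `x` holds, the inequality reads `a - b ≥ 1`; otherwise exactly one summand `2 ^ l`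
  -- survives and outweighs `b`, so both sides are true.
  cases x <;> cases y <;> cases z <;> simp at hxyz ⊢ <;> omega
end

section
/- Let l be a natural number, let a and b be natural numbers with a < 2^l and b < 2^l, and let x, y, z be Booleans exactly one of which is true. Then the integer inequality 2^l * ⟦x⟧ + ⟦y⟧ + 2^l * ⟦z⟧ + a - b ≥ 1 holds if and only if (y = true → a ≥ b). (This is the correctness of the third PREC-PBC constraint: it encodes the conditions put on the Y variables of the precedence.) -/
theorem prec_pbc_third_constraint_correct (l : ℕ) (a b : ℕ)
    (ha : a < 2 ^ l) (hb : b < 2 ^ l) (x y z : Bool)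
    (hxyz : (if x then 1 else 0) + (if y then 1 else 0) + (if z then 1 else 0) = 1) :
    2 ^ l * (if x then (1 : ℤ) else 0) + (if y then 1 else 0) +
        2 ^ l * (if z then 1 else 0) + (a : ℤ) - (b : ℤ) ≥ 1 ↔
      (y = true → a ≥ b) := by
  have hb' : (b : ℤ) < 2 ^ l := by exact_mod_cast hb
  -- If `x` or `z` holds, the summand `2 ^ l` exceeds `b`, so both sides are true;
  -- if `y` holds, the inequality reads `1 + a - b ≥ 1`.
  cases x <;> cases y <;> cases z <;> simp at hxyz ⊢ <;> omega
end

section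
/- Let F be a type, l a natural number, i : F → ℕ a function with i f < 2^l for all f, and X, Y, Z : F → F → Bool. Suppose that for all f ≠ g the three PREC-PBC constraints hold (as integer constraints): 2⟦X f g⟧ + ⟦Y f g⟧ + ⟦Y g f⟧ + 2⟦Z f g⟧ = 2, and -⟦X f g⟧ + 2^l⟦Y f g⟧ + 2^l⟦Z f g⟧ + i f - i g ≥ 0, and 2^l⟦X f g⟧ + ⟦Y f g⟧ + 2^l⟦Z f g⟧ + i f - i g ≥ 1. Then for all f ≠ g: if X f g = true then i f > i g, and if Y f g = true then i f = i g. (Soundness of the pseudo-boolean precedence encoding: any satisfying assignment of PREC-PBC(F) represents a quasi-precedence, with X encoding the strict part and Y encoding the equivalence part of the order on F induced by the interpretation i.) -/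
/-!
The first constraint forces exactly one of three cases: `X f g` alone, `Z f g` alone, or
`Y f g` and `Y g f` together. If `X f g` holds, the second constraint reduces to
`-1 + i f - i g ≥ 0`. If `Y f g` holds, then so does `Y g f`, and the third constraint, at
`(f, g)` and at `(g, f)`, reduces to `i f ≥ i g` and `i g ≥ i f`.
-/


theorem prec_pbc_sound {F : Type*} (l : ℕ) (i : F → ℕ)
    (hi : ∀ f, i f < 2 ^ l) (X Y Z : F → F → Bool)
    (h1 : ∀ f g : F, f ≠ g →
      2 * (if X f g then (1 : ℤ) else 0) + (if Y f g then 1 else 0) +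
        (if Y g f then 1 else 0) + 2 * (if Z f g then 1 else 0) = 2)
    (h2 : ∀ f g : F, f ≠ g →
      -(if X f g then (1 : ℤ) else 0) + 2 ^ l * (if Y f g then 1 else 0) +
        2 ^ l * (if Z f g then 1 else 0) + (i f : ℤ) - (i g : ℤ) ≥ 0)
    (h3 : ∀ f g : F, f ≠ g →
      2 ^ l * (if X f g then (1 : ℤ) else 0) + (if Y f g then 1 else 0) +
        2 ^ l * (if Z f g then 1 else 0) + (i f : ℤ) - (i g : ℤ) ≥ 1) :
    ∀ f g : F, f ≠ g →
      (X f g = true → i f > i g) ∧ (Y f g = true → i f = i g) := by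
  intro f g hfg
  have a1 := h1 f g hfg
  have a2 := h2 f g hfg
  have a3 := h3 f g hfg
  have b1 := h1 g f hfg.symm
  have b3 := h3 g f hfg.symm
  constructor
  · intro hX
    cases hY : Y f g <;> cases hY' : Y g f <;> cases hZ : Z f g <;> simp_all <;> omega
  · intro hY
    cases hY' : Y g f <;> cases hX : X f g <;> cases hZ : Z f g <;>
      cases hX' : X g f <;> cases hZ' : Z g f <;> simp_all <;> omega
end

section
/- Let F be a type, l a natural number, and i : F → ℕ a function with i f < 2^l for all f. Define X f g := decide (i f > i g), Y f g := decide (i f = i g), and Z f g := decide (i f < i g). Then for all f ≠ g the three PREC-PBC constraints hold (as integer constraints): 2⟦X f g⟧ + ⟦Y f g⟧ + ⟦Y g f⟧ + 2⟦Z f g⟧ = 2, and -⟦X f g⟧ + 2^l⟦Y f g⟧ + 2^l⟦Z f g⟧ + i f - i g ≥ 0, and 2^l⟦X f g⟧ + ⟦Y f g⟧ + 2^l⟦Z f g⟧ + i f - i g ≥ 1. (Completeness of the pseudo-boolean precedence encoding: every interpretation of the symbols as l-bit natural numbers yields a satisfying assignment of PREC-PBC(F).) -/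
theorem prec_pbc_complete {F : Type*} (l : ℕ) (i : F → ℕ)
    (hi : ∀ f, i f < 2 ^ l) :
    ∀ f g : F, f ≠ g →
      (let X : F → F → Bool := fun f g => decide (i f > i g)
       let Y : F → F → Bool := fun f g => decide (i f = i g)
       let Z : F → F → Bool := fun f g => decide (i f < i g)
       2 * (if X f g then (1 : ℤ) else 0) + (if Y f g then 1 else 0) +
           (if Y g f then 1 else 0) + 2 * (if Z f g then 1 else 0) = 2 ∧
       -(if X f g then (1 : ℤ) else 0) + 2 ^ l * (if Y f g then 1 else 0) +
           2 ^ l * (if Z f g then 1 else 0) + (i f : ℤ) - (i g : ℤ) ≥ 0 ∧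
       2 ^ l * (if X f g then (1 : ℤ) else 0) + (if Y f g then 1 else 0) +
           2 ^ l * (if Z f g then 1 else 0) + (i f : ℤ) - (i g : ℤ) ≥ 1) := by
  intro f g _
  have hf : (i f : ℤ) < 2 ^ l := by exact_mod_cast hi f
  have hg : (i g : ℤ) < 2 ^ l := by exact_mod_cast hi g
  -- By trichotomy exactly one of `X f g`, `Y f g`, `Z f g` holds, and `Y` is symmetric.
  -- The bound `i g < 2 ^ l` is what pays for the negative difference `i f - i g` under `Z f g`.
  rcases lt_trichotomy (i f) (i g) with h | h | h
  · simp only [decide_eq_true_eq, gt_iff_lt, h, h.ne, h.ne', h.not_gt, if_true, if_false]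
    omega
  · simp [h]
  · simp only [decide_eq_true_eq, gt_iff_lt, h, h.ne, h.ne', h.not_gt, if_true, if_false]
    omega
end
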